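/- Let N be a natural number, let a_1, ..., a_N be distinct positive real numbers, and let A_1, ..., A_N be positive real numbers. Then the vector w_A = (√A_1/a_1, ..., √A_N/a_N) is a cyclic vector for the weighted Cauchy matrix C_{a,A}; that is, the linear span of the vectors {C_{a,A}^n w_A : n ≥ 0} is all of ℂ^N. -/

import Mathlib

/-!
Write `C` for the Cauchy matrix, `D = diag(a)` and `v = v_A`, so that `w_A = D⁻¹ v`. Everything
rests on the Lyapunov equation `D C + C D = v v*`, which carries cyclicity of `v` for `D` over to
cyclicity of `D⁻¹ v` for `C`.

By the Hautus test, `D⁻¹ v` is cyclic for `C` unless `C` has a left eigenvector `x C = μ x` with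
`x D⁻¹ v = 0`. Put `y = x D⁻¹`. Then `y v = 0`, so the Lyapunov equation gives
`y C D = -x C = -μ y D`, that is, `y C = -μ y`. As `C` is Hermitian, `μ` is real, and its left
eigenvectors `x` and `y` would be orthogonal if `μ ≠ -μ`; but `y x* = y D y* > 0`. Hence `x C = 0`.

On the other hand, multiplying the Lyapunov equation by `x` and `x*` shows that `x C = 0` forces
`x v = 0` and then `x D C = 0`. Iterating, `x Dⁿ v = 0` for all `n`, so `x = 0` as `v` is cyclic for
`D`. For distinct `a_k` this last cyclicity is the nonvanishing of a Vandermonde determinant.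
-/

open Matrix MeasureTheory
open scoped ComplexOrder

/-- The weighted Cauchy matrix `C_{a,A} = (√(A_j A_k)/(a_j + a_k))_{j,k}`, as a complex matrix. -/
noncomputable def cauchyMatrix {N : ℕ} (a A : Fin N → ℝ) : Matrix (Fin N) (Fin N) ℂ :=
  Matrix.of fun j k => ((Real.sqrt (A j * A k) / (a j + a k) : ℝ) : ℂ)

/-- The vector `v_A = (√A_1, ..., √A_N)` in `ℂ^N`. -/
noncomputable def vecA {N : ℕ} (A : Fin N → ℝ) : Fin N → ℂ :=
  fun k => ((Real.sqrt (A k) : ℝ) : ℂ)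

/-- A vector `w` is cyclic for a square matrix `M` if its orbit under the powers of `M` spans the
whole space. -/
def IsCyclicVector {R n : Type*} [CommSemiring R] [Fintype n] [DecidableEq n]
    (M : Matrix n n R) (w : n → R) : Prop :=
  Submodule.span R (Set.range fun k : ℕ => (M ^ k) *ᵥ w) = ⊤

theorem IsCyclicVector.eq_zero_of_forall_dotProduct {R n : Type*} [CommSemiring R] [Fintype n]
    [DecidableEq n] {M : Matrix n n R} {w : n → R} (hw : IsCyclicVector M w) {x : n → R}
    (hx : ∀ k : ℕ, x ⬝ᵥ (M ^ k *ᵥ w) = 0) : x = 0 :=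
  (dotProductEquiv R n).map_eq_zero_iff.1 (LinearMap.ext_on_range hw hx)

section Field

variable {K n : Type*} [Field K] [Fintype n] [DecidableEq n]

theorem isCyclicVector_of_forall_dotProduct {M : Matrix n n K} {w : n → K}
    (h : ∀ x : n → K, (∀ k : ℕ, x ⬝ᵥ (M ^ k *ᵥ w) = 0) → x = 0) : IsCyclicVector M w := by
  by_contra hne
  obtain ⟨f, hf, hle⟩ := Submodule.exists_le_ker_of_lt_top _ (lt_top_iff_ne_top.2 hne)
  obtain ⟨x, rfl⟩ := (dotProductEquiv K n).surjective f
  have hx : x = 0 := h x fun k => hle (Submodule.subset_span ⟨k, rfl⟩)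
  exact hf (by rw [hx, map_zero])

theorem isCyclicVector_diagonal {d v : n → K} (hd : Function.Injective d) (hv : ∀ k, v k ≠ 0) :
    IsCyclicVector (diagonal d) v := by
  refine isCyclicVector_of_forall_dotProduct fun x hx => ?_
  let e := (Fintype.equivFin n).symm
  have hsum (i : ℕ) : ∑ k, x k * v k * d k ^ i = 0 := by
    rw [← hx i, diagonal_pow]
    refine Finset.sum_congr rfl fun k _ => ?_
    rw [mulVec_diagonal, Pi.pow_apply]
    ring
  have hxv : (fun i => x (e i) * v (e i)) = 0 :=
    eq_zero_of_forall_pow_sum_mul_pow_eq_zero (hd.comp e.injective) fun i =>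
      (e.sum_comp fun k => x k * v k * d k ^ (i : ℕ)).trans (hsum i)
  ext k
  have hk : x k * v k = 0 := by simpa using congrFun hxv (e.symm k)
  exact (mul_eq_zero.1 hk).resolve_right (hv k)

/-- The Popov–Belevitch–Hautus test for controllability, for a single input `w`. -/
theorem isCyclicVector_of_forall_vecMul_eq_smul [IsAlgClosed K] {M : Matrix n n K} {w : n → K}
    (h : ∀ (μ : K) (x : n → K), x ᵥ* M = μ • x → x ⬝ᵥ w = 0 → x = 0) : IsCyclicVector M w := by
  let P : Submodule K (n → K) :=
    { carrier := {x | ∀ k : ℕ, x ⬝ᵥ (M ^ k *ᵥ w) = 0}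
      add_mem' := fun hx hy k => by rw [add_dotProduct, hx k, hy k, add_zero]
      zero_mem' := fun _ => zero_dotProduct _
      smul_mem' := fun c x hx k => by rw [smul_dotProduct, hx k, smul_zero] }
  have hPM : ∀ x ∈ P, M.vecMulLinear x ∈ P := fun x hx k => by
    rw [vecMulLinear_apply, ← dotProduct_mulVec, mulVec_mulVec, ← pow_succ']
    exact hx (k + 1)
  refine isCyclicVector_of_forall_dotProduct fun x hx => ?_
  by_contra hx0
  have : Nontrivial P := ⟨⟨x, hx⟩, 0, Subtype.coe_ne_coe.1 hx0⟩
  obtain ⟨μ, hμ⟩ := Module.End.exists_eigenvalue (M.vecMulLinear.restrict hPM)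
  obtain ⟨z, hz⟩ := hμ.exists_hasEigenvector
  have hzM : (z : n → K) ᵥ* M = μ • (z : n → K) := congrArg Subtype.val hz.apply_eq_smul
  have hzw : (z : n → K) ⬝ᵥ w = 0 := by simpa only [pow_zero, one_mulVec] using z.2 0
  exact hz.2 (Subtype.ext (h μ z hzM hzw))

end Field

theorem vecMul_vecMul_add_of_lyapunov {R n : Type*} [Semiring R] [Fintype n]
    {C D : Matrix n n R} {u v : n → R} (hCD : D * C + C * D = vecMulVec v u) (x : n → R) :
    x ᵥ* D ᵥ* C + x ᵥ* C ᵥ* D = (x ⬝ᵥ v) • u := by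
  rw [vecMul_vecMul, vecMul_vecMul, ← vecMul_add, hCD, vecMul_vecMulVec]

section StarRing

variable {R n : Type*} [CommRing R] [IsDomain R] [StarRing R] [Fintype n]
  {C D : Matrix n n R} {v : n → R}

theorem eq_star_of_isHermitian_of_vecMul_eq_smul (hC : C.IsHermitian) {x y : n → R} {μ ν : R}
    (hx : x ᵥ* C = μ • x) (hy : y ᵥ* C = ν • y) (hxy : x ⬝ᵥ star y ≠ 0) : μ = star ν := by
  refine mul_right_cancel₀ hxy ?_
  calc μ * (x ⬝ᵥ star y) = x ᵥ* C ⬝ᵥ star y := by rw [hx, smul_dotProduct, smul_eq_mul]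
    _ = x ⬝ᵥ star (y ᵥ* C) := by rw [star_vecMul, hC.eq, dotProduct_mulVec]
    _ = star ν * (x ⬝ᵥ star y) := by rw [hy, star_smul, dotProduct_smul, smul_eq_mul]

theorem dotProduct_eq_zero_of_lyapunov (hC : C.IsHermitian)
    (hCD : D * C + C * D = vecMulVec v (star v)) {x : n → R} (hx : x ᵥ* C = 0) :
    x ⬝ᵥ v = 0 := by
  have hCx : C *ᵥ star x = 0 := by rw [← hC.eq, ← star_vecMul, hx, star_zero]
  have h : (x ⬝ᵥ v) * star (x ⬝ᵥ v) = 0 := by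
    calc (x ⬝ᵥ v) * star (x ⬝ᵥ v) = ((x ⬝ᵥ v) • star v) ⬝ᵥ star x := by
          rw [smul_dotProduct, star_dotProduct_star, smul_eq_mul]
      _ = (x ᵥ* D ᵥ* C) ⬝ᵥ star x := by
          rw [← vecMul_vecMul_add_of_lyapunov hCD, hx, zero_vecMul, add_zero]
      _ = 0 := by rw [← dotProduct_mulVec, hCx, dotProduct_zero]
  simpa using h

theorem IsCyclicVector.eq_zero_of_lyapunov [DecidableEq n] (hv : IsCyclicVector D v)
    (hC : C.IsHermitian) (hCD : D * C + C * D = vecMulVec v (star v)) {x : n → R}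
    (hx : x ᵥ* C = 0) : x = 0 := by
  have hker : ∀ k : ℕ, x ᵥ* D ^ k ᵥ* C = 0 := by
    intro k
    induction k with
    | zero => rwa [pow_zero, vecMul_one]
    | succ k ih =>
      have h := vecMul_vecMul_add_of_lyapunov hCD (x ᵥ* D ^ k)
      rwa [ih, zero_vecMul, add_zero, dotProduct_eq_zero_of_lyapunov hC hCD ih, zero_smul,
        vecMul_vecMul x, ← pow_succ] at h
  refine hv.eq_zero_of_forall_dotProduct fun k => ?_
  rw [dotProduct_mulVec]
  exact dotProduct_eq_zero_of_lyapunov hC hCD (hker k)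

end StarRing

section OrderedStarField

variable {K n : Type*} [Field K] [StarRing K] [PartialOrder K] [StarOrderedRing K]
  [Fintype n] [DecidableEq n] {C D : Matrix n n K} {v : n → K}

theorem vecMul_eq_zero_of_lyapunov (hC : C.IsHermitian) (hD : D.PosDef)
    (hCD : D * C + C * D = vecMulVec v (star v)) {x : n → K} {μ : K} (hx : x ᵥ* C = μ • x)
    (hxv : x ⬝ᵥ (D⁻¹ *ᵥ v) = 0) : x ᵥ* C = 0 := by
  obtain rfl | hx0 := eq_or_ne x 0
  · exact zero_vecMul C
  obtain ⟨y, rfl⟩ := vecMul_surjective_iff_isUnit.2 hD.isUnit x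
  have hyv : y ⬝ᵥ v = 0 := by
    rwa [← dotProduct_mulVec, mulVec_mulVec,
      mul_nonsing_inv _ ((isUnit_iff_isUnit_det D).1 hD.isUnit), one_mulVec] at hxv
  have hyC : y ᵥ* C = -μ • y := by
    refine vecMul_injective_of_isUnit hD.isUnit ?_
    have h := vecMul_vecMul_add_of_lyapunov hCD y
    rw [hyv, zero_smul, hx] at h
    simpa only [smul_vecMul, neg_vecMul, neg_smul] using eq_neg_of_add_eq_zero_right h
  have hxy : y ᵥ* D ⬝ᵥ star y ≠ 0 := by
    have hy : star y ≠ 0 := fun h => hx0 (by rw [star_eq_zero.1 h]; exact zero_vecMul D)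
    simpa only [star_star, dotProduct_mulVec] using (hD.dotProduct_mulVec_pos hy).ne'
  have hreal : μ = star μ :=
    eq_star_of_isHermitian_of_vecMul_eq_smul hC hx hx (dotProduct_self_star_eq_zero.not.2 hx0)
  have hneg : μ = star (-μ) := eq_star_of_isHermitian_of_vecMul_eq_smul hC hx hyC hxy
  have hμ : μ = 0 := by
    rw [star_neg, ← hreal] at hneg
    exact self_eq_neg.1 hneg
  rw [hx, hμ, zero_smul]

theorem IsCyclicVector.inv_mulVec_of_lyapunov [IsAlgClosed K] (hv : IsCyclicVector D v)
    (hC : C.IsHermitian) (hD : D.PosDef) (hCD : D * C + C * D = vecMulVec v (star v)) :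
    IsCyclicVector C (D⁻¹ *ᵥ v) :=
  isCyclicVector_of_forall_vecMul_eq_smul fun _ _ hx hxv =>
    hv.eq_zero_of_lyapunov hC hCD (vecMul_eq_zero_of_lyapunov hC hD hCD hx hxv)

end OrderedStarField

section Cauchy

variable {N : ℕ}

theorem isHermitian_cauchyMatrix (a A : Fin N → ℝ) : (cauchyMatrix a A).IsHermitian := by
  ext j k
  simp [cauchyMatrix, mul_comm (A j), add_comm (a j : ℂ)]

theorem cauchyMatrix_lyapunov {a A : Fin N → ℝ} (ha : ∀ j k, a j + a k ≠ 0)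
    (hA : ∀ k, 0 ≤ A k) :
    diagonal (fun k => (a k : ℂ)) * cauchyMatrix a A
      + cauchyMatrix a A * diagonal (fun k => (a k : ℂ)) = vecMulVec (vecA A) (star (vecA A)) := by
  ext j k
  have h : (a j + a k : ℂ) ≠ 0 := mod_cast ha j k
  simp only [cauchyMatrix, vecA, Matrix.add_apply, diagonal_mul, mul_diagonal, of_apply,
    vecMulVec_apply, Pi.star_apply, RCLike.star_def, Complex.conj_ofReal, Real.sqrt_mul (hA j)]
  push_cast
  field_simp

theorem vecA_ne_zero {A : Fin N → ℝ} (hA : ∀ k, 0 < A k) (k : Fin N) : vecA A k ≠ 0 :=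
  Complex.ofReal_ne_zero.2 (Real.sqrt_pos.2 (hA k)).ne'

theorem inv_diagonal_mulVec_vecA {a : Fin N → ℝ} (ha : ∀ k, a k ≠ 0) (A : Fin N → ℝ) :
    (diagonal fun k => (a k : ℂ))⁻¹ *ᵥ vecA A = fun k => ((Real.sqrt (A k) / a k : ℝ) : ℂ) := by
  have hu : IsUnit (fun k => (a k : ℂ)) :=
    Pi.isUnit_iff.2 fun k => isUnit_iff_ne_zero.2 (Complex.ofReal_ne_zero.2 (ha k))
  ext k
  rw [inv_diagonal, mulVec_diagonal, Ring.inverse_of_isUnit hu]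
  simp [vecA, div_eq_inv_mul]

end Cauchy

/-- The vector `w_A = (√A_1/a_1, ..., √A_N/a_N)` is cyclic for the weighted
Cauchy matrix: the span of `{C_{a,A}^n w_A : n ≥ 0}` is all of `ℂ^N`. -/
theorem cauchyMatrix_cyclic_wA (N : ℕ) (a A : Fin N → ℝ)
    (ha : Function.Injective a) (ha0 : ∀ k, 0 < a k) (hA : ∀ k, 0 < A k) :
    Submodule.span ℂ
      (Set.range fun n : ℕ =>
        (cauchyMatrix a A ^ n) *ᵥ (fun k => ((Real.sqrt (A k) / a k : ℝ) : ℂ))) = ⊤ := by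
  have hD : (diagonal fun k => (a k : ℂ)).PosDef :=
    PosDef.diagonal fun k => Complex.zero_lt_real.2 (ha0 k)
  have hv : IsCyclicVector (diagonal fun k => (a k : ℂ)) (vecA A) :=
    isCyclicVector_diagonal (Complex.ofReal_injective.comp ha) (vecA_ne_zero hA)
  have hCD := cauchyMatrix_lyapunov (fun j k => (add_pos (ha0 j) (ha0 k)).ne') fun k => (hA k).le
  rw [← inv_diagonal_mulVec_vecA fun k => (ha0 k).ne']
  exact hv.inv_mulVec_of_lyapunov (isHermitian_cauchyMatrix a A) hD hCD
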